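/- Let G be a finite connected simple graph with twin classes C_1, …, C_k of sizes n_i = |C_i|, representatives c_i ∈ C_i, and reduced graph H. Then for every m with 2 ≤ m ≤ |V(G)|, the m-Steiner Wiener index of G satisfies SW_m(G) = Σ_{i : G[C_i] complete} (m−1)·C(n_i, m) + Σ_{i : G[C_i] edgeless} m·C(n_i, m) + Σ_{S ⊆ V(G), |S| = m, |I(S)| > 1} ( d_H(S_r) + Σ_{i ∈ I(S)} (t_i − 1) ), where for each m-subset S we set I(S) = {i : S ∩ C_i ≠ ∅}, t_i = |S ∩ C_i|, S_r = {c_i : i ∈ I(S)}, and d_H(S_r) is the Steiner distance of S_r in H. -/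

import Mathlib

open SimpleGraph

/-- Two vertices `u` and `v` of a simple graph are *twins* if
`N(u) \ {v} = N(v) \ {u}`, where `N` denotes the open neighborhood. -/
def IsTwin {V : Type*} (G : SimpleGraph V) (u v : V) : Prop :=
  G.neighborSet u \ {v} = G.neighborSet v \ {u}

/-- The *Steiner distance* of a set `S` of vertices of `G`: the minimum number of edges
of a connected subgraph of `G` containing all vertices of `S`. -/
noncomputable def steinerDist {V : Type*} (G : SimpleGraph V) (S : Set V) : ℕ :=
  sInf {n | ∃ T : G.Subgraph, T.Connected ∧ S ⊆ T.verts ∧ T.edgeSet.ncard = n}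

/-- The *m-Steiner Wiener index* of `G`: the sum of the Steiner distances of all
`m`-element subsets of the vertex set of `G`. -/
noncomputable def steinerWiener {V : Type*} [Fintype V] (m : ℕ) (G : SimpleGraph V) : ℕ :=
  ∑ S ∈ Finset.powersetCard m (Finset.univ : Finset V), steinerDist G (S : Set V)

/-!
The Steiner distance of `S` is one less than the least size of a vertex set `W ⊇ S` inducing a
connected subgraph, because such a subgraph has a spanning tree. Twin classes are modules: two
vertices of different classes are adjacent if and only if their representatives are, so the graph
is obtained from its reduced graph by substituting the classes for the vertices. Provided that at
least two classes are met, a vertex set is therefore connected if and only if its set of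
representatives is. When `S` meets at least two classes, an optimal `W` for `S` projects to an
optimal set for the representatives, and conversely such a set lifts to the union of `S` and one
vertex from every class that it meets and `S` does not. Finally, a twin class is a clique or an
independent set whose members have a common neighbour, and a set inside one class spans a tree by
itself in the first case and after adding that neighbour in the second.
-/

section SteinerDist

variable {V : Type*} {G : SimpleGraph V} {S W : Set V}

theorem steinerDist_add_one_le_ncard [Finite W] (hSW : S ⊆ W) (hW : (G.induce W).Connected) :
    steinerDist G S + 1 ≤ W.ncard := by
  let K : G.Subgraph := (⊤ : G.Subgraph).induce W
  have hcard : Nat.card K.verts = W.ncard := Nat.card_coe_set_eq W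
  have : Finite K.verts := ‹Finite W›
  rw [induce_eq_coe_induce_top] at hW
  obtain ⟨T, hT, hTree⟩ := hW.exists_isTree_le
  let T' : G.Subgraph := Subgraph.coeSubgraph (G' := K) (toSubgraph T hT)
  have hconn : T'.Connected := (hTree.connected.toSubgraph hT).coeSubgraph
  have hverts : T'.verts = W := Subtype.coe_image_univ W
  have hedges : T'.edgeSet.ncard ≤ T.edgeSet.ncard := by
    rw [Subgraph.edgeSet_map]
    exact Set.ncard_image_le (Set.toFinite _)
  have hdist : steinerDist G S ≤ T'.edgeSet.ncard :=
    Nat.sInf_le ⟨T', hconn, hverts ▸ hSW, rfl⟩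
  have htree : Nat.card T.edgeSet + 1 = W.ncard :=
    (isTree_iff_connected_and_card.1 hTree).2.trans hcard
  rw [Nat.card_coe_set_eq] at htree
  omega

theorem connected_induce_insert_of_forall_adj {w : V}
    (hw : ∀ u ∈ S, G.Adj u w) : (G.induce (insert w S)).Connected := by
  refine connected_iff_exists_forall_reachable _ |>.2 ⟨⟨w, Set.mem_insert w S⟩, ?_⟩
  rintro ⟨u, rfl | hu⟩
  · exact Reachable.refl _
  · exact Adj.reachable (hw u hu).symm

theorem not_connected_induce_of_isIndepSet (hS : G.IsIndepSet S) (hnt : S.Nontrivial) :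
    ¬ (G.induce S).Connected := by
  intro hconn
  have := hnt.coe_sort
  obtain ⟨a, ha⟩ := hnt.nonempty
  obtain ⟨b, hab⟩ := hconn.preconnected.exists_adj_of_nontrivial ⟨a, ha⟩
  exact hS ha b.2 (Subtype.coe_ne_coe.2 hab.ne) hab

variable [Finite V]

theorem exists_connected_induce_ncard_eq (hG : G.Connected) (S : Set V) :
    ∃ W, S ⊆ W ∧ (G.induce W).Connected ∧ W.ncard = steinerDist G S + 1 := by
  have hne : {n | ∃ T : G.Subgraph, T.Connected ∧ S ⊆ T.verts ∧ T.edgeSet.ncard = n}.Nonempty :=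
    ⟨_, ⊤, Subgraph.connected_iff'.2 (Subgraph.topIso.connected_iff.2 hG), Set.subset_univ S, rfl⟩
  obtain ⟨T, hT, hST, hedges⟩ := Nat.sInf_mem hne
  refine ⟨T.verts, hST, hT.induce_verts, le_antisymm ?_
    (steinerDist_add_one_le_ncard hST hT.induce_verts)⟩
  calc T.verts.ncard ≤ T.coe.edgeSet.ncard + 1 := hT.coe.card_vert_le_card_edgeSet_add_one
    _ = T.edgeSet.ncard + 1 := by
      rw [← Subgraph.image_coe_edgeSet_coe,
        Set.ncard_image_of_injective _ (Sym2.map.injective Subtype.val_injective)]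
    _ = steinerDist G S + 1 := by rw [hedges, steinerDist]

theorem steinerDist_add_one_eq_ncard_of_isClique (hG : G.Connected) (hS : G.IsClique S)
    (hne : S.Nonempty) : steinerDist G S + 1 = S.ncard := by
  obtain ⟨W, hSW, -, hWcard⟩ := exists_connected_induce_ncard_eq hG S
  have : Nonempty S := hne.to_subtype
  have hconn : (G.induce S).Connected := induce_eq_top.2 hS ▸ connected_top
  exact (steinerDist_add_one_le_ncard subset_rfl hconn).antisymm
    (hWcard ▸ Set.ncard_le_ncard hSW)

theorem steinerDist_eq_ncard_of_isIndepSet (hG : G.Connected) (hS : G.IsIndepSet S)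
    (hnt : S.Nontrivial) {w : V} (hw : ∀ u ∈ S, G.Adj u w) : steinerDist G S = S.ncard := by
  obtain ⟨W, hSW, hW, hWcard⟩ := exists_connected_induce_ncard_eq hG S
  have hne : S ≠ W := by
    rintro rfl
    exact not_connected_induce_of_isIndepSet hS hnt hW
  have hlower : S.ncard < W.ncard := Set.ncard_lt_ncard (hSW.ssubset_of_ne hne)
  have hupper := steinerDist_add_one_le_ncard (Set.subset_insert w S)
    (connected_induce_insert_of_forall_adj hw)
  have := Set.ncard_insert_le w S
  omega

end SteinerDist

section Image

variable {α β : Type*} [Finite α] {f : α → β} {S W : Set α}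

theorem ncard_add_ncard_image_le (hSW : S ⊆ W) :
    S.ncard + (f '' W).ncard ≤ W.ncard + (f '' S).ncard := by
  have himage : (f '' W).ncard ≤ (f '' S).ncard + (W \ S).ncard :=
    calc (f '' W).ncard = (f '' S ∪ f '' (W \ S)).ncard := by
          rw [← Set.image_union, Set.union_sdiff_cancel hSW]
      _ ≤ (f '' S).ncard + (f '' (W \ S)).ncard := Set.ncard_union_le _ _
      _ ≤ (f '' S).ncard + (W \ S).ncard := Nat.add_le_add_left Set.ncard_image_le _
  have := Set.ncard_sdiff_add_ncard_of_subset hSW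
  omega

theorem exists_superset_image_eq_ncard_le (hf : Function.Surjective f) {W' : Set β}
    (hSW : f '' S ⊆ W') :
    ∃ W, S ⊆ W ∧ f '' W = W' ∧ W.ncard + (f '' S).ncard ≤ S.ncard + W'.ncard := by
  have : Finite β := .of_surjective f hf
  let s := Function.surjInv hf
  refine ⟨S ∪ s '' (W' \ f '' S), Set.subset_union_left, ?_, ?_⟩
  · rw [Set.image_union, Set.image_image]
    simp only [s, Function.surjInv_eq, Set.image_id', Set.union_sdiff_cancel hSW]
  · have hunion := Set.ncard_union_le S (s '' (W' \ f '' S))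
    have hadded : (s '' (W' \ f '' S)).ncard ≤ (W' \ f '' S).ncard := Set.ncard_image_le
    have := Set.ncard_sdiff_add_ncard_of_subset hSW
    omega

end Image

/-- `G'` is the quotient of `G` by the modular partition into the fibres of `f`; equivalently, `G`
arises from `G'` by substituting the graph induced on `f ⁻¹' {x}` for each vertex `x`. The
edges inside the fibres are arbitrary. -/
structure IsModularQuotient {V V' : Type*} (G : SimpleGraph V) (G' : SimpleGraph V')
    (f : V → V') : Prop where
  surjective : Function.Surjective f
  adj_iff : ∀ {u v}, f u ≠ f v → (G.Adj u v ↔ G'.Adj (f u) (f v))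

namespace IsModularQuotient

variable {V V' : Type*} {G : SimpleGraph V} {G' : SimpleGraph V'} {f : V → V'}

theorem induce (h : IsModularQuotient G G' f) (W : Set V) :
    IsModularQuotient (G.induce W) (G'.induce (f '' W)) (Set.imageFactorization f W) where
  surjective := Set.imageFactorization_surjective
  adj_iff huv := h.adj_iff fun heq => huv (Subtype.ext heq)

theorem adj_of_map_adj (h : IsModularQuotient G G' f) {u v : V} (huv : G'.Adj (f u) (f v)) :
    G.Adj u v :=
  (h.adj_iff huv.ne).2 huv

theorem reachable_map (h : IsModularQuotient G G' f) {u v : V} (huv : G.Reachable u v) :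
    G'.Reachable (f u) (f v) := by
  obtain ⟨walk⟩ := huv
  induction walk with
  | nil => exact Reachable.refl _
  | @cons a b _ hab _ ih =>
    by_cases hf : f a = f b
    · rwa [hf]
    · exact ((h.adj_iff hf).1 hab).reachable.trans ih

theorem connected_map (h : IsModularQuotient G G' f) (hG : G.Connected) : G'.Connected where
  preconnected := h.surjective.forall₂.2 fun u v => h.reachable_map (hG.preconnected u v)
  nonempty := hG.nonempty.map f

theorem connected_of_nontrivial [Nontrivial V'] (h : IsModularQuotient G G' f)
    (hG' : G'.Connected) : G.Connected := by
  let s : G' →g G :=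
    { toFun := Function.surjInv h.surjective
      map_rel' := fun hab => h.adj_of_map_adj (by simpa only [Function.surjInv_eq] using hab) }
  have hfs (a : V') : f (s a) = a := Function.surjInv_eq h.surjective a
  -- Every vertex of a fibre is adjacent to all vertices of a neighbouring fibre.
  have hfiber (u : V) : G.Reachable u (s (f u)) := by
    obtain ⟨b, hb⟩ := hG'.preconnected.exists_adj_of_nontrivial (f u)
    have hub : G.Adj u (s b) := h.adj_of_map_adj (by rwa [hfs])
    exact hub.reachable.trans (s.map_adj hb).symm.reachable
  have : Nonempty V := hG'.nonempty.map s
  refine ⟨fun u v => ?_⟩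
  exact (hfiber u).trans (((hG'.preconnected _ _).map s).trans (hfiber v).symm)

variable [Finite V]

theorem steinerDist_add_ncard_image (h : IsModularQuotient G G' f) (hG : G.Connected) {S : Set V}
    (hS : (f '' S).Nontrivial) :
    steinerDist G S + (f '' S).ncard = steinerDist G' (f '' S) + S.ncard := by
  have : Finite V' := .of_surjective f h.surjective
  apply le_antisymm
  · obtain ⟨W', hSW', hW', hW'card⟩ :=
      exists_connected_induce_ncard_eq (h.connected_map hG) (f '' S)
    obtain ⟨W, hSW, rfl, hWcard⟩ := exists_superset_image_eq_ncard_le h.surjective hSW'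
    have : Nontrivial (f '' W) := (hS.mono hSW').coe_sort
    have := steinerDist_add_one_le_ncard hSW ((h.induce W).connected_of_nontrivial hW')
    omega
  · obtain ⟨W, hSW, hW, hWcard⟩ := exists_connected_induce_ncard_eq hG S
    have := steinerDist_add_one_le_ncard (Set.image_mono hSW) ((h.induce W).connected_map hW)
    have := ncard_add_ncard_image_le (f := f) hSW
    omega

end IsModularQuotient

section Twins

variable {V : Type*} {G : SimpleGraph V} {u u' v v' w : V}

theorem isTwin_iff : IsTwin G u v ↔ ∀ w, w ≠ u → w ≠ v → (G.Adj u w ↔ G.Adj v w) := by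
  simp only [IsTwin, Set.ext_iff, Set.mem_sdiff, mem_neighborSet, Set.mem_singleton_iff]
  refine forall_congr' fun w => ?_
  by_cases hu : w = u <;> by_cases hv : w = v <;> simp_all

theorem IsTwin.symm (h : IsTwin G u v) : IsTwin G v u :=
  Eq.symm h

theorem IsTwin.trans (huv : IsTwin G u v) (hvw : IsTwin G v w) : IsTwin G u w := by
  rw [isTwin_iff] at *
  grind [G.adj_comm]

theorem IsTwin.adj_congr (hu : IsTwin G u u') (hv : IsTwin G v v') (huv : ¬ IsTwin G u v) :
    G.Adj u v ↔ G.Adj u' v' := by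
  have hvu : v ≠ u := by
    rintro rfl
    exact huv rfl
  have hvu' : v ≠ u' := by
    rintro rfl
    exact huv hu
  have huv' : u' ≠ v' := by
    rintro rfl
    exact huv (hu.trans hv.symm)
  calc G.Adj u v ↔ G.Adj u' v := isTwin_iff.1 hu v hvu hvu'
    _ ↔ G.Adj v u' := G.adj_comm u' v
    _ ↔ G.Adj v' u' := isTwin_iff.1 hv u' hvu'.symm huv'
    _ ↔ G.Adj u' v' := G.adj_comm v' u'

theorem isIndepSet_iff_forall_not_adj {T : Set V} :
    G.IsIndepSet T ↔ ∀ u ∈ T, ∀ v ∈ T, ¬ G.Adj u v :=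
  ⟨fun hT _ hu _ hv huv => hT hu hv huv.ne huv, fun hT u hu v hv _ => hT u hu v hv⟩

theorem isClique_of_pairwise_isTwin {T : Set V} (hT : T.Pairwise (IsTwin G)) {a b : V}
    (ha : a ∈ T) (hb : b ∈ T) (hab : G.Adj a b) : G.IsClique T := by
  have hadj_of_adj {x y z : V} (hx : x ∈ T) (hz : z ∈ T) (hxy : G.Adj x y) (hzy : z ≠ y) :
      G.Adj z y := by
    by_cases hxz : x = z
    · rwa [← hxz]
    · exact (isTwin_iff.1 (hT hx hz hxz) y hxy.ne' hzy.symm).1 hxy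
  intro u hu v hv huv
  by_cases hub : u = b
  · exact hub ▸ (hadj_of_adj ha hv hab (hub ▸ huv.symm)).symm
  · exact (hadj_of_adj hb hv (hadj_of_adj ha hu hab hub).symm huv.symm).symm

theorem isClique_or_isIndepSet_of_pairwise_isTwin {T : Set V} (hT : T.Pairwise (IsTwin G)) :
    G.IsClique T ∨ G.IsIndepSet T := by
  refine or_iff_not_imp_right.2 fun hindep => ?_
  obtain ⟨a, ha, b, hb, hab⟩ : ∃ a ∈ T, ∃ b ∈ T, G.Adj a b := by
    simpa [isIndepSet_iff_forall_not_adj] using hindep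
  exact isClique_of_pairwise_isTwin hT ha hb hab

theorem exists_forall_adj_of_pairwise_isTwin [Nontrivial V] (hG : G.Preconnected) {T : Set V}
    (hT : T.Pairwise (IsTwin G)) (hindep : G.IsIndepSet T) :
    ∃ w, ∀ u ∈ T, G.Adj u w := by
  obtain rfl | ⟨a, ha⟩ := T.eq_empty_or_nonempty
  · exact ⟨Classical.arbitrary V, by simp⟩
  obtain ⟨w, haw⟩ := hG.exists_adj_of_nontrivial a
  have hw : w ∉ T := fun hw => isIndepSet_iff_forall_not_adj.1 hindep a ha w hw haw
  refine ⟨w, fun u hu => ?_⟩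
  by_cases hau : a = u
  · rwa [← hau]
  · exact (isTwin_iff.1 (hT ha hu hau) w haw.ne' (ne_of_mem_of_not_mem hu hw).symm).1 haw

theorem isModularQuotient_of_isTwin_iff {ι : Type*} {c : ι → V} {p : V → ι}
    (hp : ∀ v i, IsTwin G (c i) v ↔ p v = i) :
    IsModularQuotient G (G.induce (Set.range c)) (Set.rangeFactorization c ∘ p) where
  surjective := by
    rintro ⟨-, i, rfl⟩
    exact ⟨c i, Subtype.ext (congrArg c ((hp _ _).1 rfl))⟩
  adj_iff {u v} huv := by
    have hrep (x : V) : IsTwin G (c (p x)) x := (hp x (p x)).2 rfl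
    refine (hrep u).symm.adj_congr (hrep v).symm fun htwin => huv ?_
    exact Subtype.ext (congrArg c ((hp v (p u)).1 ((hrep u).trans htwin)).symm)

end Twins

section FiniteSums

open Finset

variable {α ι : Type*} [DecidableEq ι] {p : α → ι}

theorem forall_mem_eq_iff_mem_image_and_card_image_lt_two {S : Finset α} (hS : S.Nonempty) {i : ι} :
    (∀ x ∈ S, p x = i) ↔ i ∈ S.image p ∧ #(S.image p) < 2 := by
  rw [Nat.lt_succ_iff, card_le_one]
  constructor
  · intro hS'
    obtain ⟨x, hx⟩ := hS
    exact ⟨mem_image.2 ⟨x, hx, hS' x hx⟩, by grind⟩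
  · rintro ⟨hi, huniq⟩ x hx
    exact huniq _ (mem_image_of_mem p hx) _ hi

variable (p)

theorem sum_card_fiber_sub_one_add_card_image (S : Finset α) :
    ∑ i ∈ S.image p, (#{v ∈ S | p v = i} - 1) + #(S.image p) = #S := by
  rw [card_eq_sum_ones, ← sum_add_distrib, card_eq_sum_card_image p S]
  refine sum_congr rfl fun i hi => Nat.sub_add_cancel ?_
  exact card_pos.2 (fiber_nonempty_iff_mem_image.2 hi)

theorem sum_powersetCard_card_image_lt_two [Fintype ι] {M : Type*} [AddCommMonoid M]
    (T : Finset α) {m : ℕ} (hm : m ≠ 0) (F : Finset α → M) :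
    ∑ S ∈ powersetCard m T with #(S.image p) < 2, F S =
      ∑ i, ∑ S ∈ powersetCard m {v ∈ T | p v = i}, F S := by
  calc ∑ S ∈ powersetCard m T with #(S.image p) < 2, F S
      = ∑ S ∈ powersetCard m T with #(S.image p) < 2, ∑ _i ∈ S.image p, F S := by
        refine sum_congr rfl fun S hS => ?_
        rw [mem_filter, mem_powersetCard] at hS
        have hne : S.Nonempty := card_ne_zero.1 (hS.1.2 ▸ hm)
        have hone : #(S.image p) = 1 :=
          (Nat.le_of_lt_succ hS.2).antisymm (hne.image p).card_pos
        rw [sum_const, hone, one_smul]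
    _ = ∑ i, ∑ S ∈ powersetCard m {v ∈ T | p v = i}, F S := by
        refine (sum_comm' fun i S => ?_).symm
        have hfiber (hcard : #S = m) : (∀ x ∈ S, p x = i) ↔ i ∈ S.image p ∧ #(S.image p) < 2 :=
          forall_mem_eq_iff_mem_image_and_card_image_lt_two (card_ne_zero.1 (hcard ▸ hm))
        simp only [mem_univ, true_and, mem_filter, mem_powersetCard, subset_iff]
        grind

end FiniteSums

section TwinClasses

open Finset

variable {V : Type*} [Finite V] {G : SimpleGraph V} {m : ℕ} {T : Finset V}

theorem sum_steinerDist_powersetCard_of_isClique (hG : G.Connected) (hT : G.IsClique T)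
    (hm : m ≠ 0) :
    ∑ S ∈ powersetCard m T, steinerDist G (S : Set V) = (m - 1) * (#T).choose m := by
  rw [mul_comm, ← card_powersetCard]
  refine sum_const_nat fun S hS => ?_
  obtain ⟨hST, rfl⟩ := mem_powersetCard.1 hS
  have hne : (S : Set V).Nonempty := card_ne_zero.1 hm
  have := steinerDist_add_one_eq_ncard_of_isClique hG (hT.subset hST) hne
  rw [Set.ncard_coe_finset] at this
  omega

theorem sum_steinerDist_powersetCard_of_isIndepSet (hG : G.Connected) (hT : G.IsIndepSet T)
    {w : V} (hw : ∀ u ∈ T, G.Adj u w) (hm : 2 ≤ m) :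
    ∑ S ∈ powersetCard m T, steinerDist G (S : Set V) = m * (#T).choose m := by
  rw [mul_comm, ← card_powersetCard]
  refine sum_const_nat fun S hS => ?_
  obtain ⟨hST, rfl⟩ := mem_powersetCard.1 hS
  have hnt : (S : Set V).Nontrivial := one_lt_card_iff_nontrivial.1 hm
  rw [steinerDist_eq_ncard_of_isIndepSet hG (hT.mono hST) hnt fun u hu => hw u (hST hu),
    Set.ncard_coe_finset]

theorem sum_steinerDist_powersetCard_of_pairwise_isTwin [Decidable (G.IsClique T)]
    [Decidable (G.IsIndepSet T)] (hG : G.Connected) (hT : (T : Set V).Pairwise (IsTwin G))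
    (hm : 2 ≤ m) :
    ∑ S ∈ powersetCard m T, steinerDist G (S : Set V) =
      (if G.IsClique T then (m - 1) * (#T).choose m else 0) +
        (if G.IsIndepSet T then m * (#T).choose m else 0) := by
  obtain hlt | hle := lt_or_ge #T m
  · simp [powersetCard_eq_empty.2 hlt, Nat.choose_eq_zero_of_lt hlt]
  obtain ⟨a, ha, b, hb, hab⟩ := one_lt_card.1 (hm.trans hle)
  have : Nontrivial V := ⟨a, b, hab⟩
  rcases isClique_or_isIndepSet_of_pairwise_isTwin hT with hclique | hindep
  · have hnindep : ¬ G.IsIndepSet T := fun hindep => hindep ha hb hab (hclique ha hb hab)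
    rw [if_pos hclique, if_neg hnindep, add_zero,
      sum_steinerDist_powersetCard_of_isClique hG hclique (by omega)]
  · have hnclique : ¬ G.IsClique T := fun hclique => hindep ha hb hab (hclique ha hb hab)
    obtain ⟨w, hw⟩ := exists_forall_adj_of_pairwise_isTwin hG.preconnected hT hindep
    rw [if_neg hnclique, if_pos hindep, zero_add,
      sum_steinerDist_powersetCard_of_isIndepSet hG hindep hw hm]

theorem steinerDist_eq_add_sum_of_isTwin_iff [DecidableEq V] {ι : Type*} [DecidableEq ι]
    {c : ι → V} {p : V → ι} (hG : G.Connected) (hp : ∀ v i, IsTwin G (c i) v ↔ p v = i)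
    {S : Finset V} (hS : 2 ≤ #(S.image p)) :
    steinerDist G (S : Set V) =
      steinerDist (G.induce (Set.range c))
          (Subtype.val ⁻¹' (((S.image p).image c : Finset V) : Set V)) +
        ∑ i ∈ S.image p, (#{v ∈ S | p v = i} - 1) := by
  have hpc (i : ι) : p (c i) = i := (hp _ _).1 rfl
  have hcinj : c.Injective := Function.LeftInverse.injective hpc
  have himage : Set.rangeFactorization c ∘ p '' S =
      Subtype.val ⁻¹' (((S.image p).image c : Finset V) : Set V) := by
    ext ⟨-, i, rfl⟩
    simp [Set.rangeFactorization, Subtype.ext_iff]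
  have hcard : (Set.rangeFactorization c ∘ p '' S).ncard = #(S.image p) := by
    rw [Set.image_comp, Set.ncard_image_of_injective _ (Set.rangeFactorization_injective.2 hcinj),
      ← coe_image, Set.ncard_coe_finset]
  have hnt : (Set.rangeFactorization c ∘ p '' S).Nontrivial :=
    Set.one_lt_ncard_iff_nontrivial.1 (by omega)
  have hdist := (isModularQuotient_of_isTwin_iff hp).steinerDist_add_ncard_image hG hnt
  have hsum := sum_card_fiber_sub_one_add_card_image p S
  rw [hcard, himage, Set.ncard_coe_finset] at hdist
  omega

end TwinClasses

theorem exists_forall_mem_iff_eq_of_cover_of_disjoint {α ι : Type*} {C : ι → Finset α}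
    (hcover : ∀ v, ∃ i, v ∈ C i) (hdisj : ∀ i j, i ≠ j → Disjoint (C i) (C j)) :
    ∃ p : α → ι, ∀ v i, v ∈ C i ↔ p v = i := by
  choose p hp using hcover
  refine ⟨p, fun v i => ⟨fun hv => ?_, fun hv => hv ▸ hp v⟩⟩
  by_contra hne
  exact Finset.disjoint_left.1 (hdisj _ _ hne) (hp v) hv

/-- Let `G` be a finite connected simple graph with twin classes
`C 1, …, C k` of sizes `n i = |C i|`, representatives `c i ∈ C i`, and reduced graph `H`.
Then for every `m` with `2 ≤ m ≤ |V(G)|`, the `m`-Steiner Wiener index of `G` satisfies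
`SW_m(G) = Σ_{i : G[C i] complete} (m−1)·C(n i, m) + Σ_{i : G[C i] edgeless} m·C(n i, m)
 + Σ_{S ⊆ V(G), |S| = m, |I(S)| > 1} (d_H(S_r) + Σ_{i ∈ I(S)} (t i − 1))`,
where `I(S) = {i : S ∩ C i ≠ ∅}`, `t i = |S ∩ C i|` and `S_r = {c i : i ∈ I(S)}`. -/
theorem steinerWiener_eq_of_twinClasses {V : Type*} [Fintype V] [DecidableEq V]
    (G : SimpleGraph V) [DecidableRel G.Adj] (hG : G.Connected)
    (k : ℕ) (C : Fin k → Finset V) (c : Fin k → V)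
    (hC : ∀ i, (C i : Set V) = {v | IsTwin G (c i) v})
    (hcover : ∀ v : V, ∃ i, v ∈ C i)
    (hdisj : ∀ i j, i ≠ j → Disjoint (C i) (C j))
    (m : ℕ) (hm : 2 ≤ m) (hmV : m ≤ Fintype.card V) :
    steinerWiener m G =
      (∑ i ∈ Finset.univ.filter (fun i => ∀ u ∈ C i, ∀ v ∈ C i, u ≠ v → G.Adj u v),
          (m - 1) * (C i).card.choose m) +
      (∑ i ∈ Finset.univ.filter (fun i => ∀ u ∈ C i, ∀ v ∈ C i, ¬ G.Adj u v),
          m * (C i).card.choose m) +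
      ∑ S ∈ (Finset.powersetCard m (Finset.univ : Finset V)).filter
          (fun S => 2 ≤ (Finset.univ.filter fun i => (S ∩ C i).Nonempty).card),
        (steinerDist (G.induce (Set.range c))
            (Subtype.val ⁻¹'
              (((Finset.univ.filter fun i => (S ∩ C i).Nonempty).image c : Finset V) : Set V)) +
          ∑ i ∈ Finset.univ.filter (fun i => (S ∩ C i).Nonempty), ((S ∩ C i).card - 1)) := by
  obtain ⟨p, hp⟩ := exists_forall_mem_iff_eq_of_cover_of_disjoint hcover hdisj
  have htwin (v : V) (i : Fin k) : IsTwin G (c i) v ↔ p v = i :=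
    (Set.ext_iff.1 (hC i) v).symm.trans (hp v i)
  have hpairwise (i : Fin k) : (C i : Set V).Pairwise (IsTwin G) := by
    rw [hC i]
    exact fun u hu v hv _ => hu.symm.trans hv
  have hinter (S : Finset V) (i : Fin k) : S ∩ C i = {v ∈ S | p v = i} := by
    ext v
    rw [Finset.mem_inter, Finset.mem_filter, hp]
  have hfiber (i : Fin k) : {v ∈ (Finset.univ : Finset V) | p v = i} = C i := by
    rw [← hinter, Finset.univ_inter]
  simp only [hinter, Finset.fiber_nonempty_iff_mem_image, Finset.filter_univ_mem]
  rw [steinerWiener, ← Finset.sum_filter_not_add_sum_filter _ fun S => 2 ≤ (S.image p).card]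
  congr 1
  · simp only [not_le]
    rw [sum_powersetCard_card_image_lt_two p _ (by omega), Finset.sum_filter, Finset.sum_filter,
      ← Finset.sum_add_distrib]
    refine Finset.sum_congr rfl fun i _ => ?_
    rw [hfiber]
    simpa only [isIndepSet_iff_forall_not_adj, isClique_iff, Set.Pairwise, Finset.mem_coe] using
      sum_steinerDist_powersetCard_of_pairwise_isTwin hG (hpairwise i) hm
  · refine Finset.sum_congr rfl fun S hS => ?_
    exact steinerDist_eq_add_sum_of_isTwin_iff hG htwin (Finset.mem_filter.1 hS).2
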